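/- Let T be a finite tree on at least 3 vertices. Then D(T) ≤ D'(T) ≤ D(T) + 1; moreover D'(T) = D(T) + 1 holds only if T is a bicentric tree whose central edge e = vw is such that the two components T_v and T_w of T − e (rooted at v and w respectively) are isomorphic as rooted trees. -/

import Mathlib

open SimpleGraph

/-- The distinguishing number of a simple graph `G`: the least `d` such that there is a
vertex labeling with `d` labels preserved only by the trivial automorphism. -/
noncomputable def distinguishingNumber {V : Type*} (G : SimpleGraph V) : ℕ :=
  sInf {d : ℕ | ∃ φ : V → Fin d,
    ∀ f : G ≃g G, (∀ x : V, φ (f x) = φ x) → ∀ x : V, f x = x}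

/-- The distinguishing index of a simple graph `G`: the least `d` such that there is an
edge labeling with `d` labels preserved only by the trivial automorphism. -/
noncomputable def distinguishingIndex {V : Type*} (G : SimpleGraph V) : ℕ :=
  sInf {d : ℕ | ∃ ψ : G.edgeSet → Fin d,
    ∀ f : G ≃g G, (∀ e : G.edgeSet, ψ (f.mapEdgeSet e) = ψ e) → ∀ x : V, f x = x}

/-- The eccentricity of a vertex `v` in a finite graph `G`: the maximum distance from `v`
to any vertex. -/
noncomputable def eccentricity {V : Type*} [Fintype V] (G : SimpleGraph V) (v : V) : ℕ :=
  Finset.univ.sup fun u => G.dist v u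

/-- The center of a finite graph `G`: the set of vertices of minimum eccentricity. -/
noncomputable def graphCenter {V : Type*} [Fintype V] (G : SimpleGraph V) : Set V :=
  {v | ∀ u : V, eccentricity G v ≤ eccentricity G u}

/-!
Automorphisms of a finite tree preserve its center, which consists of one vertex or of two adjacent
ones. Orienting the tree towards a root `r` matches each edge with its endpoint farther from `r`, so
for an automorphism fixing `r`, preserving an edge labeling is the same as preserving a vertex
labeling away from `r`. Labelings can therefore be moved from edges to vertices and back as soon as
the labels force a central vertex to be fixed. On vertices this costs nothing: the root carries a
spare label, which can tell it from the other central vertex. On edges it costs at most one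
additional label, placed on an edge that leaves the center, and this is needed only if some
automorphism exchanges the two central vertices, hence the two halves of the tree.
-/

section Labelings

variable {V α : Type*} {G : SimpleGraph V}

/-- A vertex labeling is distinguishing if only the identity automorphism preserves it. The labels
may come from any type, so that `Option α` can provide the labels of `α` and one more. -/
def IsDistinguishing (G : SimpleGraph V) (φ : V → α) : Prop :=
  ∀ f : G ≃g G, (∀ x, φ (f x) = φ x) → ∀ x, f x = x

/-- An edge labeling is distinguishing if only the identity automorphism preserves it. As for vertex
labelings, the labels may come from any type. -/
def IsEdgeDistinguishing (G : SimpleGraph V) (ψ : G.edgeSet → α) : Prop :=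
  ∀ f : G ≃g G, (∀ e, ψ (f.mapEdgeSet e) = ψ e) → ∀ x, f x = x

theorem IsDistinguishing.comp_injective {β : Type*} {φ : V → α} (hφ : IsDistinguishing G φ)
    {ι : α → β} (hι : Function.Injective ι) : IsDistinguishing G (ι ∘ φ) :=
  fun f hf => hφ f fun x => hι (hf x)

theorem IsEdgeDistinguishing.comp_injective {β : Type*} {ψ : G.edgeSet → α}
    (hψ : IsEdgeDistinguishing G ψ) {ι : α → β} (hι : Function.Injective ι) :
    IsEdgeDistinguishing G (ι ∘ ψ) :=
  fun f hf => hψ f fun e => hι (hf e)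

theorem isDistinguishing_id (G : SimpleGraph V) : IsDistinguishing G id :=
  fun _ hf => hf

theorem distinguishingNumber_le_card [Fintype α] {φ : V → α} (hφ : IsDistinguishing G φ) :
    distinguishingNumber G ≤ Fintype.card α :=
  Nat.sInf_le ⟨_, hφ.comp_injective (Fintype.equivFin α).injective⟩

theorem distinguishingIndex_le_card [Fintype α] {ψ : G.edgeSet → α}
    (hψ : IsEdgeDistinguishing G ψ) : distinguishingIndex G ≤ Fintype.card α :=
  Nat.sInf_le ⟨_, hψ.comp_injective (Fintype.equivFin α).injective⟩

theorem exists_isDistinguishing_fin [Finite V] (G : SimpleGraph V) :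
    ∃ φ : V → Fin (distinguishingNumber G), IsDistinguishing G φ :=
  Nat.sInf_mem (s := {d | ∃ φ : V → Fin d, IsDistinguishing G φ})
    ⟨_, _, (isDistinguishing_id G).comp_injective (Finite.equivFin V).injective⟩

theorem IsEdgeDistinguishing.exists_fin [Finite α] {ψ : G.edgeSet → α}
    (hψ : IsEdgeDistinguishing G ψ) :
    ∃ ψ' : G.edgeSet → Fin (distinguishingIndex G), IsEdgeDistinguishing G ψ' :=
  Nat.sInf_mem (s := {d | ∃ ψ' : G.edgeSet → Fin d, IsEdgeDistinguishing G ψ'})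
    ⟨_, _, hψ.comp_injective (Finite.equivFin α).injective⟩

theorem fixes_and_preserves_of_preserves_update_none {β : Type*} [DecidableEq β] {ψ : β → α}
    {b₀ : β} {σ : β → β} (hσ : Function.Injective σ)
    (h : ∀ b, Function.update (some ∘ ψ) b₀ none (σ b) = Function.update (some ∘ ψ) b₀ none b) :
    σ b₀ = b₀ ∧ ∀ b, ψ (σ b) = ψ b := by
  have hfix : σ b₀ = b₀ := by
    by_contra hne
    simpa [hne] using h b₀
  refine ⟨hfix, fun b => ?_⟩
  obtain rfl | hb := eq_or_ne b b₀
  · rw [hfix]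
  · have hσb : σ b ≠ b₀ := fun hb₀ => hb (hσ (hb₀.trans hfix.symm))
    simpa [hb, hσb] using h b

end Labelings

section Isomorphisms

variable {V W : Type*} {G : SimpleGraph V} {H : SimpleGraph W}

theorem edist_hom_apply_le (f : G →g H) (u v : V) : H.edist (f u) (f v) ≤ G.edist u v :=
  le_iInf fun p => (edist_le (p.map f)).trans_eq (by rw [Walk.length_map])

theorem edist_iso_apply (f : G ≃g H) (u v : V) : H.edist (f u) (f v) = G.edist u v :=
  (edist_hom_apply_le f.toHom u v).antisymm <| by
    simpa using edist_hom_apply_le f.symm.toHom (f u) (f v)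

theorem dist_iso_apply (f : G ≃g H) (u v : V) : H.dist (f u) (f v) = G.dist u v :=
  congrArg ENat.toNat (edist_iso_apply f u v)

theorem eccentricity_iso_apply [Fintype V] [Fintype W] (f : G ≃g H) (v : V) :
    eccentricity H (f v) = eccentricity G v := by
  rw [eccentricity, ← Finset.univ_map_equiv_to_embedding f.toEquiv, Finset.sup_map]
  exact Finset.sup_congr rfl fun u _ => dist_iso_apply f v u

theorem iso_apply_mem_graphCenter_iff [Fintype V] [Fintype W] (f : G ≃g H) {v : V} :
    f v ∈ graphCenter H ↔ v ∈ graphCenter G := by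
  simp only [graphCenter, Set.mem_ofPred_eq, f.surjective.forall, eccentricity_iso_apply]

/-- An isomorphism under which the edge sets `s` and `t` correspond, regarded as an isomorphism
between the graphs with these edges deleted. -/
def deleteEdgesIso (f : G ≃g H) {s : Set (Sym2 V)} {t : Set (Sym2 W)}
    (hst : ∀ e, Sym2.map f e ∈ t ↔ e ∈ s) : G.deleteEdges s ≃g H.deleteEdges t where
  toEquiv := f.toEquiv
  map_rel_iff' {a b} := by
    rw [deleteEdges_adj, deleteEdges_adj]
    exact and_congr f.map_adj_iff (not_congr (hst s(a, b)))

theorem exists_induce_reachable_iso (f : G ≃g H) (v : V) :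
    ∃ φ : G.induce {u | G.Reachable v u} ≃g H.induce {u | H.Reachable (f v) u},
      φ ⟨v, Reachable.refl v⟩ = ⟨f v, Reachable.refl (f v)⟩ :=
  ⟨f.induce (f.toEquiv.bijOn fun _ => f.reachable_iff), rfl⟩

theorem exists_rooted_iso_of_swap (g : G ≃g G) {v w : V} (hv : g v = w) (hw : g w = v) :
    ∃ φ : (G.deleteEdges {s(v, w)}).induce {u | (G.deleteEdges {s(v, w)}).Reachable v u} ≃g
        (G.deleteEdges {s(v, w)}).induce {u | (G.deleteEdges {s(v, w)}).Reachable w u},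
      φ ⟨v, Reachable.refl v⟩ = ⟨w, Reachable.refl w⟩ := by
  have hswap : Sym2.map g s(v, w) = s(v, w) := by rw [Sym2.map_mk, hv, hw, Sym2.eq_swap]
  have hfixed (e : Sym2 V) : Sym2.map g e = s(v, w) ↔ e = s(v, w) :=
    ⟨fun h => Sym2.map.injective g.injective (h.trans hswap.symm), fun h => h ▸ hswap⟩
  subst hv
  exact exists_induce_reachable_iso (deleteEdgesIso g hfixed) v

end Isomorphisms

section Center

variable {V : Type*}

theorem dist_add_dist_le_length {G : SimpleGraph V} {u v x : V} (p : G.Walk u v)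
    (hx : x ∈ p.support) : G.dist u x + G.dist x v ≤ p.length := by
  classical
  rw [← p.take_spec hx, Walk.length_append]
  exact add_le_add (dist_le _) (dist_le _)

theorem dist_le_eccentricity [Fintype V] (G : SimpleGraph V) (u v : V) :
    G.dist u v ≤ eccentricity G u :=
  Finset.le_sup (f := fun v => G.dist u v) (Finset.mem_univ v)

theorem exists_dist_eq_eccentricity [Fintype V] (G : SimpleGraph V) (u : V) :
    ∃ v, G.dist u v = eccentricity G u :=
  have ⟨v, _, hv⟩ :=
    Finset.exists_mem_eq_sup Finset.univ ⟨u, Finset.mem_univ u⟩ fun v => G.dist u v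
  ⟨v, hv.symm⟩

theorem graphCenter_nonempty [Fintype V] [Nonempty V] (G : SimpleGraph V) :
    (graphCenter G).Nonempty :=
  Finite.exists_min (eccentricity G)

variable {T : SimpleGraph V}

theorem dist_add_dist_le_or_of_mem_support (hT : T.IsTree) {u v x : V} {p : T.Walk u v}
    (hp : p.IsPath) (hx : x ∈ p.support) (y : V) :
    T.dist u x + T.dist x y ≤ T.dist u y ∨ T.dist v x + T.dist x y ≤ T.dist v y := by
  classical
  obtain ⟨q, hq⟩ := hT.connected.exists_walk_length_eq_dist u y
  obtain ⟨q', hq'⟩ := hT.connected.exists_walk_length_eq_dist v y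
  have hp_eq : p = (q.append q'.reverse).bypass :=
    (hT.existsUnique_path u v).unique hp (Walk.bypass_isPath _)
  have hx' : x ∈ (q.append q'.reverse).support :=
    Walk.support_bypass_subset_support _ (hp_eq ▸ hx)
  rw [Walk.mem_support_append_iff, Walk.support_reverse, List.mem_reverse] at hx'
  exact hx'.imp (fun h => hq ▸ dist_add_dist_le_length q h)
    fun h => hq' ▸ dist_add_dist_le_length q' h

theorem eccentricity_lt_max_of_mem_support [Fintype V] (hT : T.IsTree) {u v x : V}
    {p : T.Walk u v} (hp : p.IsPath) (hx : x ∈ p.support) (hxu : x ≠ u) (hxv : x ≠ v) :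
    eccentricity T x < max (eccentricity T u) (eccentricity T v) := by
  obtain ⟨y, hy⟩ := exists_dist_eq_eccentricity T x
  have hu := hT.connected.pos_dist_of_ne hxu.symm
  have hv := hT.connected.pos_dist_of_ne hxv.symm
  have huy := dist_le_eccentricity T u y
  have hvy := dist_le_eccentricity T v y
  have hcases := dist_add_dist_le_or_of_mem_support hT hp hx y
  omega

theorem isClique_graphCenter [Fintype V] (hT : T.IsTree) : T.IsClique (graphCenter T) := by
  intro u hu v hv huv
  by_contra hadj
  obtain ⟨p, hp, -⟩ := hT.existsUnique_path u v
  have hsnd : T.Adj u p.snd := p.adj_snd (Walk.not_nil_of_ne huv)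
  have hlt := eccentricity_lt_max_of_mem_support hT hp (p.getVert_mem_support 1) hsnd.ne'
    fun h => hadj (h ▸ hsnd)
  exact hlt.not_ge (max_le (hu _) (hv _))

theorem ncard_graphCenter_le_two [Fintype V] (hT : T.IsTree) : (graphCenter T).ncard ≤ 2 := by
  classical
  by_contra! hcard
  obtain ⟨a, ha, b, hb, c, hc, hab, hac, hbc⟩ := (Set.two_lt_ncard (Set.toFinite _)).1 hcard
  have hclique := isClique_graphCenter hT
  exact hT.isAcyclic.cliqueFree le_rfl _
    (is3Clique_triple_iff.2 ⟨hclique ha hb hab, hclique ha hc hac, hclique hb hc hbc⟩)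

theorem graphCenter_eq_pair [Fintype V] (hT : T.IsTree) {v w : V} (hv : v ∈ graphCenter T)
    (hw : w ∈ graphCenter T) (hvw : v ≠ w) : graphCenter T = {v, w} :=
  (Set.eq_of_subset_of_ncard_le (Set.pair_subset hv hw)
    ((ncard_graphCenter_le_two hT).trans_eq (Set.ncard_pair hvw).symm)).symm

theorem exists_fixed_or_swapped_central_edge [Fintype V] (hT : T.IsTree) :
    (∃ r, ∀ f : T ≃g T, f r = r) ∨
      ∃ v w, T.Adj v w ∧ graphCenter T = {v, w} ∧ ∃ g : T ≃g T, g v = w ∧ g w = v := by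
  have := hT.connected.nonempty
  obtain ⟨v, hv⟩ := graphCenter_nonempty T
  by_cases hfix : ∀ f : T ≃g T, f v = v
  · exact .inl ⟨v, hfix⟩
  push Not at hfix
  obtain ⟨g, hg⟩ := hfix
  have hgv : g v ∈ graphCenter T := (iso_apply_mem_graphCenter_iff g).2 hv
  have hcenter := graphCenter_eq_pair hT hv hgv hg.symm
  refine .inr ⟨v, g v, isClique_graphCenter hT hv hgv hg.symm, hcenter, g, rfl, ?_⟩
  have hggv : g (g v) ∈ ({v, g v} : Set V) := hcenter ▸ (iso_apply_mem_graphCenter_iff g).2 hgv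
  exact hggv.resolve_right fun h => hg (g.injective h)

theorem exists_adj_graphCenter_boundary [Fintype V] (hT : T.IsTree) (hcard : 3 ≤ Fintype.card V) :
    ∃ v x, T.Adj v x ∧ v ∈ graphCenter T ∧ x ∉ graphCenter T := by
  have := hT.connected.nonempty
  obtain ⟨u, hu⟩ := graphCenter_nonempty T
  obtain ⟨y, hy⟩ : ∃ y, y ∉ graphCenter T := by
    by_contra! hall
    have hncard := ncard_graphCenter_le_two hT
    rw [Set.eq_univ_of_forall hall, Set.ncard_univ, Nat.card_eq_fintype_card] at hncard
    omega
  obtain ⟨p⟩ := hT.connected.preconnected u y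
  obtain ⟨d, -, hd⟩ := p.exists_boundary_dart (graphCenter T) hu hy
  exact ⟨d.fst, d.snd, d.adj, hd⟩

end Center

section Parent

variable {V : Type*} {T : SimpleGraph V}

theorem exists_adj_dist_add_one_eq {G : SimpleGraph V} (hG : G.Connected) {r x : V} (hx : x ≠ r) :
    ∃ y, G.Adj y x ∧ G.dist r y + 1 = G.dist r x := by
  obtain ⟨p, hp⟩ := hG.exists_walk_length_eq_dist x r
  cases p with
  | nil => exact absurd rfl hx
  | @cons _ y _ hxy q =>
    refine ⟨y, hxy.symm, ?_⟩
    have hq := dist_le q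
    have htriangle := hG.dist_triangle (u := r) (v := y) (w := x)
    rw [dist_eq_one_iff_adj.2 hxy.symm] at htriangle
    rw [Walk.length_cons, dist_comm] at hp
    rw [dist_comm] at hq
    omega

theorem existsUnique_adj_dist_add_one_eq (hT : T.IsTree) {r x : V} (hx : x ≠ r) :
    ∃! y, T.Adj y x ∧ T.dist r y + 1 = T.dist r x := by
  refine existsUnique_of_exists_of_unique (exists_adj_dist_add_one_eq hT.connected hx) ?_
  rintro y z ⟨hyx, hdy⟩ ⟨hzx, hdz⟩
  obtain ⟨p, hp⟩ := hT.connected.exists_walk_length_eq_dist r y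
  obtain ⟨q, hq⟩ := hT.connected.exists_walk_length_eq_dist r z
  have hpath : (p.concat hyx).IsPath :=
    Walk.isPath_of_length_eq_dist _ (by rw [Walk.length_concat, hp, hdy])
  have hpath' : (q.concat hzx).IsPath :=
    Walk.isPath_of_length_eq_dist _ (by rw [Walk.length_concat, hq, hdz])
  simpa using congrArg Walk.penultimate ((hT.existsUnique_path r x).unique hpath hpath')

/-- The parent of a non-root vertex `x` in a tree rooted at `r`: the neighbor of `x` on the way to
`r`. -/
noncomputable def parent (hT : T.IsTree) (r : V) (x : {x // x ≠ r}) : V :=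
  (existsUnique_adj_dist_add_one_eq hT x.2).choose

variable (hT : T.IsTree) {r : V}

theorem parent_adj (x : {x // x ≠ r}) : T.Adj (parent hT r x) x :=
  (existsUnique_adj_dist_add_one_eq hT x.2).choose_spec.1.1

theorem dist_parent_add_one (x : {x // x ≠ r}) : T.dist r (parent hT r x) + 1 = T.dist r x :=
  (existsUnique_adj_dist_add_one_eq hT x.2).choose_spec.1.2

theorem parent_eq {x : {x // x ≠ r}} {y : V} (hadj : T.Adj y x)
    (hdist : T.dist r y + 1 = T.dist r x) : parent hT r x = y :=
  (existsUnique_adj_dist_add_one_eq hT x.2).unique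
    ⟨parent_adj hT x, dist_parent_add_one hT x⟩ ⟨hadj, hdist⟩

theorem ne_of_dist_add_one_eq {G : SimpleGraph V} {r x y : V}
    (hdist : G.dist r y + 1 = G.dist r x) : x ≠ r := by
  rintro rfl
  simp at hdist

theorem bijective_parent_edge (r : V) : Function.Bijective
    fun x : {x // x ≠ r} => (⟨s(parent hT r x, x), parent_adj hT x⟩ : T.edgeSet) := by
  constructor
  · intro x y hxy
    obtain ⟨-, h⟩ | ⟨hx, hy⟩ := Sym2.eq_iff.1 (congrArg Subtype.val hxy)
    · exact Subtype.ext h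
    · have hdx := dist_parent_add_one hT x
      have hdy := dist_parent_add_one hT y
      rw [hx] at hdx
      rw [← hy] at hdy
      omega
  · rintro ⟨⟨a, b⟩, hab⟩
    replace hab : T.Adj a b := hab
    obtain h | h := hT.dist_eq_dist_add_one_of_adj r hab
    · refine ⟨⟨a, ne_of_dist_add_one_eq h.symm⟩, Subtype.ext ?_⟩
      exact Sym2.eq_iff.2 (.inr ⟨parent_eq hT hab.symm h.symm, rfl⟩)
    · refine ⟨⟨b, ne_of_dist_add_one_eq h.symm⟩, Subtype.ext ?_⟩
      exact Sym2.eq_iff.2 (.inl ⟨parent_eq hT hab h.symm, rfl⟩)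

/-- The bijection from the non-root vertices of a tree rooted at `r` to its edges that sends a
vertex to the edge joining it to its parent. -/
noncomputable def parentEdge (r : V) : {x // x ≠ r} ≃ T.edgeSet :=
  Equiv.ofBijective _ (bijective_parent_edge hT r)

theorem parentEdge_of_adj_root {x : V} (hx : T.Adj r x) :
    parentEdge hT r ⟨x, hx.ne'⟩ = ⟨s(r, x), hx⟩ := by
  have hparent : parent hT r ⟨x, hx.ne'⟩ = r :=
    parent_eq hT hx (by rw [dist_self, dist_eq_one_iff_adj.2 hx])
  exact Subtype.ext (congrArg (s(·, x)) hparent)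

theorem parentEdge_iso_apply {f : T ≃g T} (hf : f r = r) {x : V} (hx : x ≠ r) (hfx : f x ≠ r) :
    parentEdge hT r ⟨f x, hfx⟩ = f.mapEdgeSet (parentEdge hT r ⟨x, hx⟩) := by
  have hparent : parent hT r ⟨f x, hfx⟩ = f (parent hT r ⟨x, hx⟩) := by
    refine parent_eq hT (f.map_adj_iff.2 (parent_adj hT ⟨x, hx⟩)) ?_
    calc T.dist r (f (parent hT r ⟨x, hx⟩)) + 1
        = T.dist (f r) (f (parent hT r ⟨x, hx⟩)) + 1 := by rw [hf]
      _ = T.dist r x := by rw [dist_iso_apply, dist_parent_add_one]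
      _ = T.dist (f r) (f x) := (dist_iso_apply f r x).symm
      _ = T.dist r (f x) := by rw [hf]
  exact Subtype.ext (congrArg (s(·, f x)) hparent)

end Parent

section Transfer

variable {V α : Type*} {T : SimpleGraph V} (hT : T.IsTree) (r : V)

open Classical in
/-- The vertex labeling of a tree rooted at `r` that gives `r` the label `c` and every other vertex
the label of the edge to its parent. -/
noncomputable def vertexLabeling (c : α) (ψ : T.edgeSet → α) (x : V) : α :=
  if hx : x = r then c else ψ (parentEdge hT r ⟨x, hx⟩)

/-- The edge labeling of a tree rooted at `r` that gives every edge the label of its endpoint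
farther from `r`. -/
noncomputable def edgeLabeling (φ : V → α) (e : T.edgeSet) : α :=
  φ ((parentEdge hT r).symm e)

variable {r}

theorem vertexLabeling_root (c : α) (ψ : T.edgeSet → α) : vertexLabeling hT r c ψ r = c :=
  dif_pos rfl

theorem vertexLabeling_of_ne (c : α) (ψ : T.edgeSet → α) {x : V} (hx : x ≠ r) :
    vertexLabeling hT r c ψ x = ψ (parentEdge hT r ⟨x, hx⟩) :=
  dif_neg hx

theorem edgeLabeling_parentEdge (φ : V → α) (x : {x // x ≠ r}) :
    edgeLabeling hT r φ (parentEdge hT r x) = φ x := by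
  rw [edgeLabeling, Equiv.symm_apply_apply]

theorem iso_apply_ne_root {f : T ≃g T} (hf : f r = r) {x : V} (hx : x ≠ r) : f x ≠ r :=
  fun h => hx (f.injective (h.trans hf.symm))

theorem preserves_of_preserves_vertexLabeling {c : α} {ψ : T.edgeSet → α} {f : T ≃g T}
    (hf : f r = r) (h : ∀ x, vertexLabeling hT r c ψ (f x) = vertexLabeling hT r c ψ x)
    (e : T.edgeSet) : ψ (f.mapEdgeSet e) = ψ e := by
  obtain ⟨⟨x, hx⟩, rfl⟩ := (parentEdge hT r).surjective e
  have hfx := iso_apply_ne_root hf hx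
  rw [← parentEdge_iso_apply hT hf hx hfx, ← vertexLabeling_of_ne hT c ψ hfx, h x,
    vertexLabeling_of_ne]

theorem preserves_of_preserves_edgeLabeling {φ : V → α} {f : T ≃g T} (hf : f r = r)
    (h : ∀ e, edgeLabeling hT r φ (f.mapEdgeSet e) = edgeLabeling hT r φ e) (x : V) :
    φ (f x) = φ x := by
  obtain rfl | hx := eq_or_ne x r
  · rw [hf]
  · have hfx := iso_apply_ne_root hf hx
    simpa only [← parentEdge_iso_apply hT hf hx hfx, edgeLabeling_parentEdge] using
      h (parentEdge hT r ⟨x, hx⟩)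

theorem IsEdgeDistinguishing.isDistinguishing_vertexLabeling {ψ : T.edgeSet → α}
    (hψ : IsEdgeDistinguishing T ψ) {c : α}
    (hr : ∀ f : T ≃g T,
      (∀ x, vertexLabeling hT r c ψ (f x) = vertexLabeling hT r c ψ x) → f r = r) :
    IsDistinguishing T (vertexLabeling hT r c ψ) :=
  fun f hf => hψ f (preserves_of_preserves_vertexLabeling hT (hr f hf) hf)

theorem IsDistinguishing.isEdgeDistinguishing_edgeLabeling {φ : V → α}
    (hφ : IsDistinguishing T φ) (hr : ∀ f : T ≃g T, f r = r) :
    IsEdgeDistinguishing T (edgeLabeling hT r φ) :=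
  fun f hf => hφ f (preserves_of_preserves_edgeLabeling hT (hr f) hf)

theorem IsEdgeDistinguishing.exists_isDistinguishing [Finite V] [Nontrivial V] (hT : T.IsTree)
    {ψ : T.edgeSet → α} (hψ : IsEdgeDistinguishing T ψ) :
    ∃ φ : V → α, IsDistinguishing T φ := by
  have := Fintype.ofFinite V
  obtain ⟨r, hr⟩ | ⟨v, w, hvw, hcenter, g, hgv, -⟩ := exists_fixed_or_swapped_central_edge hT
  · obtain ⟨y, hry⟩ := hT.connected.preconnected.exists_adj_of_nontrivial r
    exact ⟨_, hψ.isDistinguishing_vertexLabeling hT (c := ψ ⟨s(r, y), hry⟩) fun f _ => hr f⟩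
  · obtain ⟨c, hc⟩ : ∃ c, c ≠ ψ ⟨s(v, w), hvw⟩ := by
      -- Otherwise `ψ` is constant, so the nontrivial automorphism `g` preserves it.
      by_contra! hconst
      exact hvw.ne' (hgv.symm.trans (hψ g (fun e => by rw [hconst (ψ _), hconst (ψ e)]) v))
    refine ⟨_, hψ.isDistinguishing_vertexLabeling hT (r := v) (c := c) fun f hf => ?_⟩
    have hfv : f v ∈ ({v, w} : Set V) :=
      hcenter ▸ (iso_apply_mem_graphCenter_iff f).2 (by simp [hcenter])
    refine hfv.resolve_right fun hfv => hc ?_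
    calc c = vertexLabeling hT v c ψ v := (vertexLabeling_root hT c ψ).symm
      _ = vertexLabeling hT v c ψ w := by rw [← hf v, hfv]
      _ = ψ ⟨s(v, w), hvw⟩ := by
        rw [vertexLabeling_of_ne hT c ψ hvw.ne', parentEdge_of_adj_root hT hvw]

theorem IsDistinguishing.exists_isEdgeDistinguishing_option [Fintype V] (hT : T.IsTree)
    (hcard : 3 ≤ Fintype.card V) {φ : V → α} (hφ : IsDistinguishing T φ) :
    ∃ ψ : T.edgeSet → Option α, IsEdgeDistinguishing T ψ := by
  classical
  obtain ⟨v, x, hvx, hv, hx⟩ := exists_adj_graphCenter_boundary hT hcard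
  let e₀ : T.edgeSet := ⟨s(v, x), hvx⟩
  refine ⟨Function.update (some ∘ edgeLabeling hT v φ) e₀ none, fun f hf => ?_⟩
  obtain ⟨he₀, hpres⟩ := fixes_and_preserves_of_preserves_update_none f.mapEdgeSet.injective hf
  have hfv : f v = v := by
    obtain ⟨h, -⟩ | ⟨h, -⟩ := Sym2.eq_iff.1 (congrArg Subtype.val he₀)
    · exact h
    · exact absurd (h ▸ (iso_apply_mem_graphCenter_iff f).2 hv) hx
  exact hφ f (preserves_of_preserves_edgeLabeling hT hfv hpres)

end Transfer

/-- Let `T` be a finite tree on at least 3 vertices. Then `D(T) ≤ D'(T) ≤ D(T) + 1`;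
moreover `D'(T) = D(T) + 1` holds only if `T` is bicentric with central edge `e = vw` such
that the two components `T_v` and `T_w` of `T − e` are isomorphic as trees rooted at `v`
and at `w`, i.e. there is a graph isomorphism between them sending `v` to `w`. -/
theorem distinguishing_tree {V : Type*} [Fintype V] (T : SimpleGraph V)
    (hT : T.IsTree) (hcard : 3 ≤ Fintype.card V) :
    distinguishingNumber T ≤ distinguishingIndex T ∧
    distinguishingIndex T ≤ distinguishingNumber T + 1 ∧
    (distinguishingIndex T = distinguishingNumber T + 1 →
      ∃ v w : V, v ≠ w ∧ T.Adj v w ∧ graphCenter T = {v, w} ∧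
        ∃ φ : (T.deleteEdges {s(v, w)}).induce
                {u | (T.deleteEdges {s(v, w)}).Reachable v u} ≃g
              (T.deleteEdges {s(v, w)}).induce
                {u | (T.deleteEdges {s(v, w)}).Reachable w u},
          φ ⟨v, Reachable.refl v⟩ = ⟨w, Reachable.refl w⟩) := by
  have : Nontrivial V := Fintype.one_lt_card_iff_nontrivial.1 (by omega)
  obtain ⟨φ, hφ⟩ := exists_isDistinguishing_fin T
  obtain ⟨ψ, hψ⟩ := hφ.exists_isEdgeDistinguishing_option hT hcard
  obtain ⟨ψ', hψ'⟩ := hψ.exists_fin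
  obtain ⟨φ', hφ'⟩ := hψ'.exists_isDistinguishing hT
  refine ⟨by simpa using distinguishingNumber_le_card hφ',
    by simpa using distinguishingIndex_le_card hψ, fun hindex => ?_⟩
  obtain ⟨r, hr⟩ | ⟨v, w, hvw, hcenter, g, hgv, hgw⟩ := exists_fixed_or_swapped_central_edge hT
  · have hle : distinguishingIndex T ≤ distinguishingNumber T := by
      simpa using distinguishingIndex_le_card (hφ.isEdgeDistinguishing_edgeLabeling hT hr)
    omega
  · exact ⟨v, w, hvw.ne, hvw, hcenter, exists_rooted_iso_of_swap g hgv hgw⟩
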